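/- arXiv:2208.09022 — 2 statements merged into one kernel-verified Lean document; each statement's English description precedes it below -/
import Mathlib

section
/- Let 1 → G → Ĝ →q→ Γ → 1 be a group extension (G a normal subgroup of Ĝ and q a surjective homomorphism with kernel G). Suppose Ĝ acts on sets E and M on the right and the restricted G-action on E is free. Let s̃: E → M be a G-equivariant map, let G act diagonally on E × M, and let s: E/G → (E×M)/G be the map induced on G-orbit spaces by e ↦ (e, s̃(e)). Equip E/G and (E×M)/G with the right Γ-actions induced by the Ĝ-actions (where [x]·γ := [x·ĝ] for any ĝ with q(ĝ) = γ). Then s̃ is Ĝ-equivariant if and only if s is Γ-equivariant. -/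
/-!
If `G` acts freely on `X`, then `y ↦ [(x, y)]` embeds `Y` into `(X × Y)/G` for every `x`: an element
of `G` carrying `(x, y)` to `(x, y')` fixes `x`, so it is trivial. Equivariance of the section says
`[(e·ĝ, s̃(e·ĝ))] = [(e·ĝ, s̃(e)·ĝ)]`, so the embedding at `x = e·ĝ` turns it into equivariance
of `s̃`.
-/

section FreeAction

open MulAction

variable {G X Y : Type*} [Group G] [MulAction G X] [MulAction G Y]

theorem orbitQuotient_mk_prod_eq_iff [IsCancelSMul G X] {x : X} {y y' : Y} :
    (⟦(x, y)⟧ : orbitRel.Quotient G (X × Y)) = ⟦(x, y')⟧ ↔ y = y' := by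
  refine ⟨fun h => ?_, fun h => h ▸ rfl⟩
  obtain ⟨g, hg⟩ : (x, y) ∈ orbit G (x, y') := Quotient.exact h
  obtain ⟨hx, hy⟩ : g • x = x ∧ g • y' = y := Prod.mk.inj hg
  obtain rfl : g = 1 := IsCancelSMul.eq_one_of_smul hx
  simpa using hy.symm

/-- The section `X/G → (X × Y)/G` of the projection `(X × Y)/G → X/G` induced by an equivariant
map `f : X → Y`, that is, the graph of `f` on orbit spaces. -/
def orbitGraph (f : X →[G] Y) : orbitRel.Quotient G X → orbitRel.Quotient G (X × Y) :=
  Quotient.map (fun x => (x, f x)) <| by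
    rintro _ x ⟨g, rfl⟩
    exact ⟨g, Prod.ext rfl (map_smul f g x).symm⟩

theorem orbitGraph_mk_eq_mk_iff [IsCancelSMul G X] (f : X →[G] Y) {x : X} {y : Y} :
    orbitGraph f ⟦x⟧ = ⟦(x, y)⟧ ↔ f x = y :=
  orbitQuotient_mk_prod_eq_iff

theorem hat_equivariant_iff_section_gamma_equivariant_general {S : Type*} [SMul S X] [SMul S Y]
    [IsCancelSMul G X] (f : X →[G] Y) :
    (∀ x (a : S), f (a • x) = a • f x) ↔
      ∀ x (a : S), orbitGraph f ⟦a • x⟧ = ⟦a • (x, f x)⟧ :=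
  forall₂_congr fun _ _ => (orbitGraph_mk_eq_mk_iff f).symm

end FreeAction

section RightAction

open MulOpposite

variable {G X : Type*} [Group G]

/-- A right action given as a function, as an action of the opposite group: this is how Mathlib
encodes right actions. -/
abbrev mulActionOfRight (act : X → G → X) (act_one : ∀ x, act x 1 = x)
    (act_act : ∀ x a b, act (act x a) b = act x (a * b)) : MulAction Gᵐᵒᵖ X where
  smul a x := act x a.unop
  one_smul := act_one
  mul_smul a b x := (act_act x b.unop a.unop).symm

variable [MulAction Gᵐᵒᵖ X] {H : Subgroup G}

theorem eq_orbitRel_op {r : X → X → Prop} (hr : ∀ x y, r x y ↔ ∃ g ∈ H, op g • x = y) :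
    r = (MulAction.orbitRel H.op X).r := by
  ext x y
  calc
    r x y ↔ ∃ g ∈ H, op g • x = y := hr x y
    _ ↔ y ∈ MulAction.orbit H.op x :=
      ⟨fun ⟨g, hg, hxy⟩ => ⟨⟨op g, hg⟩, hxy⟩, fun ⟨a, hxy⟩ => ⟨unop a.1, a.2, hxy⟩⟩
    _ ↔ MulAction.orbitRel H.op X x y := MulAction.mem_orbit_symm

theorem isCancelSMul_op (hfree : ∀ x : X, ∀ g ∈ H, op g • x = x → g = 1) :
    IsCancelSMul H.op X :=
  isCancelSMul_iff_eq_one_of_smul_eq.2 fun a x h =>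
    Subtype.ext <| unop_injective <| hfree x _ a.2 h

end RightAction

/-- Let `1 → N → Ĝ → Γ → 1` be a group extension and let `Ĝ` act on the right
on sets `E` and `M`, with the restricted `N`-action on `E` free. If
`s̃ : E → M` is `N`-equivariant and `s : E/N → (E×M)/N` is the induced map on
`N`-orbit spaces, then `s̃` is `Ĝ`-equivariant if and only if `s` is
`Γ`-equivariant (for the quotient `Γ`-actions `[x]·q(ĝ) = [x·ĝ]`). -/
theorem hat_equivariant_iff_section_gamma_equivariant
    {Ghat Γ E M : Type*} [Group Ghat] [Group Γ]
    (N : Subgroup Ghat) (q : Ghat →* Γ)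
    (hq : Function.Surjective q) (hker : q.ker = N)
    (actE : E → Ghat → E)
    (hE1 : ∀ e, actE e 1 = e)
    (hEmul : ∀ e a b, actE (actE e a) b = actE e (a * b))
    (actM : M → Ghat → M)
    (hM1 : ∀ m, actM m 1 = m)
    (hMmul : ∀ m a b, actM (actM m a) b = actM m (a * b))
    -- the restricted N-action on E is free
    (hfree : ∀ e : E, ∀ g ∈ N, actE e g = e → g = 1)
    -- s̃ : E → M is N-equivariant
    (st : E → M)
    (hstN : ∀ e : E, ∀ g ∈ N, st (actE e g) = actM (st e) g)
    -- orbit relations defining the orbit spaces E/N and (E×M)/N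
    (rE : E → E → Prop) (hrE : ∀ e e', rE e e' ↔ ∃ g ∈ N, actE e g = e')
    (rEM : E × M → E × M → Prop)
    (hrEM : ∀ p p', rEM p p' ↔ ∃ g ∈ N, (actE p.1 g, actM p.2 g) = p') :
    ∃ s : Quot rE → Quot rEM,
      -- s is the map induced on orbit spaces by e ↦ (e, s̃ e)
      (∀ e : E, s (Quot.mk rE e) = Quot.mk rEM (e, st e)) ∧
      -- s̃ is Ĝ-equivariant iff s is Γ-equivariant:
      -- s([e]·q(ĝ)) = s([e])·q(ĝ) reads s([e·ĝ]) = [(e,s̃ e)·ĝ]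
      ((∀ (e : E) (gh : Ghat), st (actE e gh) = actM (st e) gh) ↔
       (∀ (e : E) (gh : Ghat),
          s (Quot.mk rE (actE e gh))
            = Quot.mk rEM (actE e gh, actM (st e) gh))) := by
  let _ := mulActionOfRight actE hE1 hEmul
  let _ := mulActionOfRight actM hM1 hMmul
  obtain rfl : rE = (MulAction.orbitRel N.op E).r := eq_orbitRel_op hrE
  obtain rfl : rEM = (MulAction.orbitRel N.op (E × M)).r := eq_orbitRel_op hrEM
  have : IsCancelSMul N.op E := isCancelSMul_op hfree
  let f : E →[N.op] M := ⟨st, fun g e => hstN e _ g.2⟩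
  have hiff := hat_equivariant_iff_section_gamma_equivariant_general (S := Ghatᵐᵒᵖ) f
  simp only [MulOpposite.forall] at hiff
  exact ⟨orbitGraph f, fun _ => rfl, hiff⟩
end

section
/- Invariance of a reduction of structure group: let Ĝ = G ×_{(θ,c)} Γ, let E be a right Ĝ-set whose restricted G-action (via g ↦ (g,1)) is free, and let H ⊆ G be a subgroup with θ_γ(H) = H for all γ ∈ Γ. Equip the coset space G/H with the right G-action (gH)·g1 := (g1^{-1}g)H and the right Γ-action (gH)·γ := θ_γ^{-1}(g)H. Let s: E → G/H be a G-equivariant map, i.e. s(e·(g,1)) = s(e)·g for all e ∈ E and g ∈ G, and let E_s := { e ∈ E : s(e) = H } be the preimage of the identity coset. Then E_s·(1,γ) = E_s for all γ ∈ Γ if and only if s is Γ-equivariant, i.e. s(e·(1,γ)) = s(e)·γ for all e ∈ E and γ ∈ Γ. -/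
/-- A 2-cocycle of `Γ` with values in the centre of `G`, for the `Γ`-action on `G`
given by `θ`. -/
def IsTwoCocycle {G Γ : Type*} [Group G] [Group Γ] (θ : Γ →* MulAut G)
    (c : Γ → Γ → G) : Prop :=
  (∀ γ1 γ2, c γ1 γ2 ∈ Subgroup.center G) ∧
  (∀ γ, c γ 1 = 1) ∧ (∀ γ, c 1 γ = 1) ∧
  (∀ γ0 γ1 γ2, θ γ0 (c γ1 γ2) * c γ0 (γ1 * γ2) = c γ0 γ1 * c (γ0 * γ1) γ2)

/-- The twisted multiplication on `G × Γ` defined by `θ` and `c`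
(the multiplication of the twisted product `Ĝ = G ×_{(θ,c)} Γ`). -/
def tmul {G Γ : Type*} [Group G] [Group Γ] (θ : Γ →* MulAut G) (c : Γ → Γ → G)
    (a b : G × Γ) : G × Γ :=
  (a.1 * θ a.2 b.1 * c a.2 b.2, a.2 * b.2)

/-!
Fix `γ` and write `τ e = e·(1, γ)`. Both `s ∘ τ` and `e ↦ s(e)·γ` transform under `G` through the
same twist `θ_γ⁻¹`. As `G` acts transitively on `G/H`, every `G`-orbit of `E` meets `E_s`, so these
two maps agree as soon as they agree on `E_s`, where the second one is constantly `H`. Hence `s` is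
equivariant for `γ` exactly when `τ` maps `E_s` into itself. In that case `τ⁻¹(E_s) = E_s`, because
`θ_γ(H) = H`, and surjectivity of `τ` upgrades the inclusion to an equality.
-/

open Function Set

section TransitiveTarget

variable {G E X : Type*} [Group G] [MulAction G X] {ρ : G → E → E} {s : E → X} {β : G → G}
  {τ : E → E} {f : X → X} {x₀ : X}

theorem semiconj_iff_mapsTo_fiber [MulAction.IsPretransitive G X]
    (hs : ∀ g, Semiconj s (ρ g) (g • ·)) (hτ : ∀ g, Semiconj τ (ρ g) (ρ (β g)))
    (hf : ∀ g, Semiconj f (g • ·) (β g • ·)) (hx₀ : f x₀ = x₀) :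
    Semiconj s τ f ↔ MapsTo τ {e | s e = x₀} {e | s e = x₀} := by
  constructor
  · intro h e (he : s e = x₀)
    exact (h e).trans (by rw [he, hx₀])
  · intro h e
    obtain ⟨g, hg⟩ := MulAction.exists_smul_eq G (s e) x₀
    have hmem : s (ρ g e) = x₀ := (hs g e).trans hg
    apply smul_left_cancel (β g)
    calc β g • s (τ e) = s (τ (ρ g e)) := by rw [hτ g e, hs (β g) (τ e)]
      _ = x₀ := h hmem
      _ = f (g • s e) := by rw [hg, hx₀]
      _ = β g • f (s e) := hf g (s e)

theorem preimage_fiber_eq_of_semiconj (h : Semiconj s τ f) (hx₀ : ∀ x, f x = x₀ ↔ x = x₀) :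
    τ ⁻¹' {e | s e = x₀} = {e | s e = x₀} := by
  ext e
  change s (τ e) = x₀ ↔ s e = x₀
  rw [h e, hx₀]

theorem semiconj_iff_image_fiber_eq [MulAction.IsPretransitive G X]
    (hs : ∀ g, Semiconj s (ρ g) (g • ·)) (hτ : ∀ g, Semiconj τ (ρ g) (ρ (β g)))
    (hf : ∀ g, Semiconj f (g • ·) (β g • ·)) (hx₀ : ∀ x, f x = x₀ ↔ x = x₀)
    (hsurj : Surjective τ) :
    Semiconj s τ f ↔ τ '' {e | s e = x₀} = {e | s e = x₀} := by
  constructor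
  · intro h
    conv_lhs => rw [← preimage_fiber_eq_of_semiconj h hx₀]
    exact image_preimage_eq _ hsurj
  · intro h
    exact (semiconj_iff_mapsTo_fiber hs hτ hf ((hx₀ x₀).2 rfl)).2
      (mapsTo_iff_image_subset.2 h.subset)

end TransitiveTarget

section CosetMap

variable {G : Type*} [Group G] {H : Subgroup G} {β : G →* G} {f : G ⧸ H → G ⧸ H}

theorem semiconj_smul_of_apply_mk (hf : ∀ g : G, f (QuotientGroup.mk g) = QuotientGroup.mk (β g))
    (g : G) : Semiconj f (g • ·) (β g • ·) := by
  intro x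
  induction x using QuotientGroup.induction_on with
  | H a => simp only [MulAction.Quotient.smul_coe, smul_eq_mul, hf, map_mul]

theorem apply_eq_mk_one_iff_of_comap_eq
    (hf : ∀ g : G, f (QuotientGroup.mk g) = QuotientGroup.mk (β g)) (hH : H.comap β = H)
    (x : G ⧸ H) :
    f x = QuotientGroup.mk 1 ↔ x = QuotientGroup.mk 1 := by
  induction x using QuotientGroup.induction_on with
  | H a =>
    have hmem : β a ∈ H ↔ a ∈ H := by rw [← Subgroup.mem_comap, hH]
    simpa only [hf, QuotientGroup.eq, mul_one, inv_mem_iff]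

end CosetMap

section TwistedProduct

variable {G Γ E : Type*} [Group G] [Group Γ] {θ : Γ →* MulAut G} {c : Γ → Γ → G}

theorem tmul_inl_inr {γ : Γ} (hc : c γ 1 = 1) (hc' : c 1 γ = 1) (g : G) :
    tmul θ c (g, 1) (1, γ) = tmul θ c (1, γ) ((θ γ)⁻¹ g, 1) := by
  simp [tmul, hc, hc']

theorem left_inv_tmul_inr (γ : Γ) : tmul θ c ((c γ⁻¹ γ)⁻¹, γ⁻¹) (1, γ) = (1, 1) := by
  simp [tmul]

theorem surjective_act_right {actE : E → G × Γ → E} (h1 : ∀ e, actE e (1, 1) = e)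
    (hmul : ∀ e a b, actE (actE e a) b = actE e (tmul θ c a b)) (γ : Γ) :
    Surjective fun e => actE e (1, γ) := fun e =>
  ⟨actE e ((c γ⁻¹ γ)⁻¹, γ⁻¹), by simp only [hmul, left_inv_tmul_inr, h1]⟩

end TwistedProduct

theorem reduction_invariant_iff_section_equivariant_general {G Γ E : Type*}
    [Group G] [Group Γ] {θ : Γ →* MulAut G} {c : Γ → Γ → G} {γ : Γ}
    (hc : c γ 1 = 1) (hc' : c 1 γ = 1) {H : Subgroup G}
    (hH : H.map (θ γ).toMonoidHom = H) {actE : E → G × Γ → E}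
    (h1 : ∀ e, actE e (1, 1) = e)
    (hmul : ∀ e a b, actE (actE e a) b = actE e (tmul θ c a b))
    {cosG : G ⧸ H → G → G ⧸ H}
    (hcosG : ∀ g g1 : G, cosG (QuotientGroup.mk g) g1 = QuotientGroup.mk (g1⁻¹ * g))
    {cosγ : G ⧸ H → G ⧸ H}
    (hcosγ : ∀ g : G, cosγ (QuotientGroup.mk g) = QuotientGroup.mk ((θ γ)⁻¹ g))
    {s : E → G ⧸ H} (hsG : ∀ e g, s (actE e (g, 1)) = cosG (s e) g) :
    (fun e => actE e (1, γ)) '' {e | s e = QuotientGroup.mk 1} = {e | s e = QuotientGroup.mk 1} ↔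
      ∀ e, s (actE e (1, γ)) = cosγ (s e) := by
  let β : G →* G := (θ γ)⁻¹.toMonoidHom
  -- The inverse turns the right action of `G` on `E` into a left one, to match `g • xH = (gx)H`.
  let ρ : G → E → E := fun g e => actE e (g⁻¹, 1)
  have hs (g : G) : Semiconj s (ρ g) (g • ·) := fun e => by
    obtain ⟨a, ha⟩ := QuotientGroup.mk_surjective (s e)
    simp only [ρ, hsG, ← ha, hcosG, inv_inv, MulAction.Quotient.smul_coe, smul_eq_mul]
  have hτ (g : G) : Semiconj (fun e => actE e (1, γ)) (ρ g) (ρ (β g)) := fun e => by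
    simp only [ρ, hmul, tmul_inl_inr hc hc', ← map_inv β]
    rfl
  have hβ : H.comap β = H := (Subgroup.map_equiv_eq_comap_symm (θ γ) H).symm.trans hH
  exact (semiconj_iff_image_fiber_eq hs hτ (semiconj_smul_of_apply_mk hcosγ)
    (apply_eq_mk_one_iff_of_comap_eq hcosγ hβ) (surjective_act_right h1 hmul γ)).symm

/-- Invariance of a reduction of structure group: let `E` be a right `Ĝ`-set,
`Ĝ = G ×_{(θ,c)} Γ`, with free restricted `G`-action, let `H ⊆ G` be a
`θ`-invariant subgroup, and let `s : E → G/H` be `G`-equivariant for the right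
`G`-action `(gH)·g1 = (g1⁻¹g)H` on `G/H`. Then the set
`E_s = s⁻¹(H)` satisfies `E_s·(1,γ) = E_s` for all `γ` if and only if `s` is
`Γ`-equivariant for the right `Γ`-action `(gH)·γ = θ_γ⁻¹(g)H` on `G/H`. -/
theorem reduction_invariant_iff_section_equivariant {G Γ E : Type*}
    [Group G] [Group Γ] (θ : Γ →* MulAut G) (c : Γ → Γ → G)
    (hc : IsTwoCocycle θ c)
    (H : Subgroup G)
    -- H is invariant under the Γ-action: θ_γ(H) = H
    (hH : ∀ γ : Γ, Subgroup.map (θ γ).toMonoidHom H = H)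
    (actE : E → G × Γ → E)
    (h1 : ∀ e, actE e ((1 : G), (1 : Γ)) = e)
    (hmul : ∀ e a b, actE (actE e a) b = actE e (tmul θ c a b))
    -- the restricted G-action on E is free
    (hfree : ∀ (e : E) (g : G), actE e (g, 1) = e → g = 1)
    -- the right G-action on G/H: (gH)·g1 = (g1⁻¹ g)H
    (cosG : G ⧸ H → G → G ⧸ H)
    (hcosG : ∀ g g1 : G,
      cosG (QuotientGroup.mk g) g1 = QuotientGroup.mk (g1⁻¹ * g))
    -- the right Γ-action on G/H: (gH)·γ = θ_γ⁻¹(g)H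
    (cosΓ : G ⧸ H → Γ → G ⧸ H)
    (hcosΓ : ∀ (g : G) (γ : Γ),
      cosΓ (QuotientGroup.mk g) γ = QuotientGroup.mk ((θ γ)⁻¹ g))
    -- s : E → G/H is G-equivariant
    (s : E → G ⧸ H)
    (hsG : ∀ (e : E) (g : G), s (actE e (g, 1)) = cosG (s e) g) :
    -- E_s·(1,γ) = E_s for all γ iff s is Γ-equivariant
    (∀ γ : Γ, (fun e => actE e ((1 : G), γ)) '' {e : E | s e = QuotientGroup.mk (1 : G)}
        = {e : E | s e = QuotientGroup.mk (1 : G)}) ↔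
    (∀ (e : E) (γ : Γ), s (actE e ((1 : G), γ)) = cosΓ (s e) γ) := by
  rw [forall_comm (α := E)]
  exact forall_congr' fun γ => reduction_invariant_iff_section_equivariant_general
    (hc.2.1 γ) (hc.2.2.1 γ) (hH γ) h1 hmul hcosG
    (cosγ := (cosΓ · γ)) (hcosΓ · γ) hsG
end
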